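/- Let h ∈ F with h ≠ 0 be given by an admissible linear system 𝒜_h = (u_h, A_h, v_h) of dimension n with left family s_h = A_h⁻¹ v_h. Then the (n+1) × (n+1) block matrix A = [[−v_h, A_h], [0, u_h]] (first column [−v_h; 0], the top right n × n block equal to A_h, and bottom right 1 × n block equal to u_h = e₁) is invertible over F, the solution vector of the system A s = e_{n+1} is s = [h⁻¹; s_h h⁻¹], and consequently (e₁, A, e_{n+1}) is an admissible linear system for h⁻¹. -/

import Mathlib

open Matrix

/-- The row vector `e₁ = (1,0,…,0)`. -/
def e1Row (F : Type*) [Semiring F] (n : ℕ) [NeZero n] : Matrix (Fin 1) (Fin n) F :=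
  Matrix.of fun _ j => if j = 0 then 1 else 0

/-- The admissible linear system for the inverse `h⁻¹` of a nonzero element `h`:
the block matrix `A = [[−v_h, A_h], [0, u_h]]` is invertible over `F`, the solution
of `A s = e_{n+1}` is `s = [h⁻¹; s_h h⁻¹]`, and `(e₁, A, e_{n+1})` is an admissible
linear system for `h⁻¹`. -/
theorem als_inverse {K F : Type*} [Field K] [DivisionRing F] [Algebra K F]
    {n : ℕ} [NeZero n]
    (h : F) (hne : h ≠ 0)
    (Ah Bh : Matrix (Fin n) (Fin n) F) (vh : Matrix (Fin n) (Fin 1) K)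
    (hAh : Ah * Bh = 1) (hAh' : Bh * Ah = 1)
    (hh : h = (e1Row F n * Bh * vh.map (algebraMap K F)) 0 0) :
    let A : Matrix (Fin n ⊕ Fin 1) (Fin 1 ⊕ Fin n) F :=
      fromBlocks (-(vh.map (algebraMap K F))) Ah 0 (e1Row F n)
    let v : Matrix (Fin n ⊕ Fin 1) (Fin 1) F :=
      fromRows 0 (1 : Matrix (Fin 1) (Fin 1) F)
    let s : Matrix (Fin 1 ⊕ Fin n) (Fin 1) F :=
      fromRows (Matrix.of fun _ _ => h⁻¹)
        (Matrix.of fun p (_ : Fin 1) => (Bh * vh.map (algebraMap K F)) p 0 * h⁻¹)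
    (A * s = v) ∧ ∃ B : Matrix (Fin 1 ⊕ Fin n) (Fin n ⊕ Fin 1) F,
      A * B = 1 ∧ B * A = 1 ∧ (B * v) (Sum.inl 0) 0 = h⁻¹ := by
  generalize hw : vh.map (algebraMap K F) = w at *
  generalize hu : e1Row F n = u at *
  intro A v s
  obtain ⟨H, hH⟩ : ∃ H : Matrix (Fin 1) (Fin 1) F, H = Matrix.of fun _ _ => h⁻¹ := ⟨_, rfl⟩
  have hM : u * Bh * w = Matrix.of fun _ _ => h := by
    ext i j
    rw [Subsingleton.elim i 0, Subsingleton.elim j 0, ← hh]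
    rfl
  have h1 : u * Bh * w * H = 1 := by
    ext i j
    rw [Subsingleton.elim i 0, Subsingleton.elim j 0, hM, hH]
    simp [Matrix.mul_apply, hne]
  have h2 : H * (u * Bh * w) = 1 := by
    ext i j
    rw [Subsingleton.elim i 0, Subsingleton.elim j 0, hM, hH]
    simp [Matrix.mul_apply, hne]
  have hs : s = fromRows H (Bh * w * H) := by
    simp only [s, hH]
    congr 1
    ext i j
    simp [Matrix.mul_apply]
  have h1' : u * (Bh * (w * H)) = 1 := by simpa only [Matrix.mul_assoc] using h1
  have h2' : H * (u * (Bh * w)) = 1 := by simpa only [Matrix.mul_assoc] using h2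
  have a1 : ∀ {m : ℕ} (X : Matrix (Fin n) (Fin m) F), Ah * (Bh * X) = X := by
    intro m X
    rw [← Matrix.mul_assoc, hAh, Matrix.one_mul]
  have a3 : ∀ {m : ℕ} (X : Matrix (Fin 1) (Fin m) F), u * (Bh * (w * (H * X))) = X := by
    intro m X
    have := congrArg (· * X) h1'
    simpa only [Matrix.mul_assoc, Matrix.one_mul] using this
  refine ⟨?_, fromBlocks (-(H * u * Bh)) H (Bh - Bh * w * H * u * Bh) (Bh * w * H), ?_, ?_, ?_⟩
  · rw [hs]
    simp only [A, v, fromBlocks_mul_fromRows, Matrix.mul_assoc, a1, h1', Matrix.neg_mul,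
      Matrix.zero_mul, zero_add, neg_add_cancel]
  · simp only [A, fromBlocks_multiply, Matrix.mul_assoc, a1, a3, h1', hAh, Matrix.neg_mul,
      Matrix.mul_neg, Matrix.mul_sub, neg_neg, Matrix.zero_mul, zero_add, neg_add_cancel,
      neg_zero, sub_self, add_sub_cancel, fromBlocks_one]
  · simp only [A, fromBlocks_multiply, Matrix.mul_assoc, h2', hAh', Matrix.neg_mul,
      Matrix.mul_neg, Matrix.sub_mul, neg_neg, Matrix.mul_zero, add_zero, neg_add_cancel,
      neg_zero, sub_self, sub_add_cancel, Matrix.mul_one, fromBlocks_one]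
  · simp only [v, fromBlocks_mul_fromRows, Matrix.mul_zero, Matrix.mul_one, zero_add]
    simp [hH]
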